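/- arXiv:2201.03656 — 3 statements merged into one kernel-verified Lean document; each statement's English description precedes it below -/
import Mathlib

section
/- If the stacked matrix [U_{0,T}; X_{0,T}] has full row rank m + n and V ⊆ ℝⁿ is an (A, Im B)-controlled invariant subspace, then there exists a matrix G ∈ ℝ^{T×n} with X_{0,T}·G = I_n and (X_{1,T}·G)·V ⊆ V; moreover, for any such G, the feedback gain F = U_{0,T}·G satisfies A + B·F = X_{1,T}·G and hence (A + B·F)·V ⊆ V. -/
/-!
A subspace `V` with `A V ⊆ V + Im B` has a feedback `F` with `(A + B F) V ⊆ V`: write each `A v` as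
`v' + B w`, with `w` depending linearly on `v ∈ V`, and extend `v ↦ -w` to the whole space.
Since the stacked data matrix has full row rank, it is right invertible, so `U₀ G = F` and
`X₀ G = 1` can be solved simultaneously for `G`. Any right inverse `G` of `X₀` turns the data
equation `X₁ = A X₀ + B U₀` into `X₁ G = A + B (U₀ G)`.
-/

open scoped Matrix

theorem exists_linearMap_comp_eq_of_range_le {R M N P : Type*} [Ring R] [AddCommGroup M]
    [AddCommGroup N] [AddCommGroup P] [Module R M] [Module R N] [Module R P] [Module.Projective R P]
    {f : M →ₗ[R] N} {g : P →ₗ[R] N} (h : LinearMap.range g ≤ LinearMap.range f) :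
    ∃ k : P →ₗ[R] M, f ∘ₗ k = g := by
  obtain ⟨k, hk⟩ := Module.projective_lifting_property f.rangeRestrict
    (g.codRestrict (LinearMap.range f) fun p => h (LinearMap.mem_range_self g p))
    f.surjective_rangeRestrict
  exact ⟨k, LinearMap.ext fun p => congrArg Subtype.val (LinearMap.congr_fun hk p)⟩

/-- `V` is an `(A, Im B)`-controlled invariant submodule: `A V ⊆ V + Im B`. From every state in `V`,
some input keeps the successor `A v + B w` in `V`. -/
def IsControlledInvariant {R X U : Type*} [Ring R] [AddCommGroup X] [AddCommGroup U]
    [Module R X] [Module R U] (A : Module.End R X) (B : U →ₗ[R] X) (V : Submodule R X) : Prop :=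
  ∀ v ∈ V, A v ∈ V ⊔ LinearMap.range B

theorem IsControlledInvariant.exists_feedback {K X U : Type*} [DivisionRing K] [AddCommGroup X]
    [AddCommGroup U] [Module K X] [Module K U] {A : Module.End K X} {B : U →ₗ[K] X}
    {V : Submodule K X} (hV : IsControlledInvariant A B V) :
    ∃ F : X →ₗ[K] U, ∀ v ∈ V, (A + B ∘ₗ F) v ∈ V := by
  have hrange : LinearMap.range (A ∘ₗ V.subtype) ≤ LinearMap.range (V.subtype.coprod B) := by
    rw [LinearMap.range_coprod, V.range_subtype]
    rintro _ ⟨v, rfl⟩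
    exact hV v v.2
  obtain ⟨k, hk⟩ := exists_linearMap_comp_eq_of_range_le hrange
  obtain ⟨F, hF⟩ := (-(LinearMap.snd K V U ∘ₗ k)).exists_extend
  refine ⟨F, fun v hv => ?_⟩
  have hFv : F v = -(k ⟨v, hv⟩).2 := LinearMap.congr_fun hF ⟨v, hv⟩
  have hAv : A v = (k ⟨v, hv⟩).1 + B (k ⟨v, hv⟩).2 := (LinearMap.congr_fun hk ⟨v, hv⟩).symm
  have hclosed : (A + B ∘ₗ F) v = (k ⟨v, hv⟩).1 := by
    rw [LinearMap.add_apply, LinearMap.comp_apply, hFv, hAv, map_neg, add_neg_cancel_right]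
  rw [hclosed]
  exact (k ⟨v, hv⟩).1.2

section

variable {m n τ : Type*} [Fintype m] [Fintype n] [Fintype τ]

theorem IsControlledInvariant.exists_matrix_feedback {K : Type*} [Field K]
    {A : Matrix n n K} {B : Matrix n m K} {V : Submodule K (n → K)}
    (hV : IsControlledInvariant A.mulVecLin B.mulVecLin V) :
    ∃ F : Matrix m n K, ∀ v ∈ V, (A + B * F) *ᵥ v ∈ V := by
  classical
  obtain ⟨F, hF⟩ := hV.exists_feedback
  refine ⟨LinearMap.toMatrix' F, fun v hv => ?_⟩
  rw [Matrix.add_mulVec, ← Matrix.mulVec_mulVec, LinearMap.toMatrix'_mulVec]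
  exact hF v hv

theorem exists_matrix_mul_eq_one_of_rank_eq_card {K : Type*} [Field K] [DecidableEq m]
    {M : Matrix m τ K} (hM : M.rank = Fintype.card m) : ∃ W : Matrix τ m K, M * W = 1 := by
  have hrange : LinearMap.range M.mulVecLin = ⊤ :=
    Submodule.eq_top_of_finrank_eq (hM.trans (Module.finrank_fintype_fun_eq_card K).symm)
  exact Matrix.mulVec_surjective_iff_exists_right_inverse.1 (LinearMap.range_eq_top.1 hrange)

theorem exists_matrix_mul_eq_and_mul_eq_of_rank_fromRows {K p : Type*} [Field K]
    {U : Matrix m τ K} {X : Matrix n τ K}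
    (hrank : (Matrix.fromRows U X).rank = Fintype.card m + Fintype.card n)
    (F : Matrix m p K) (Y : Matrix n p K) : ∃ G : Matrix τ p K, U * G = F ∧ X * G = Y := by
  classical
  obtain ⟨W, hW⟩ := exists_matrix_mul_eq_one_of_rank_eq_card (hrank.trans Fintype.card_sum.symm)
  refine ⟨W * Matrix.fromRows F Y, (Matrix.fromRows_ext_iff _ _ _ _).1 ?_⟩
  rw [← Matrix.fromRows_mul, ← Matrix.mul_assoc, hW, Matrix.one_mul]

theorem data_eq_mul_add_mul_of_trajectory {R : Type*} [NonUnitalNonAssocSemiring R] {T : ℕ}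
    {A : Matrix n n R} {B : Matrix n m R} {x : ℕ → n → R} {u : ℕ → m → R}
    (hdyn : ∀ t, x (t + 1) = A *ᵥ x t + B *ᵥ u t)
    {X₀ X₁ : Matrix n (Fin T) R} {U₀ : Matrix m (Fin T) R} (hX₀ : ∀ j t, X₀ j t = x t j)
    (hX₁ : ∀ j t, X₁ j t = x (t + 1) j) (hU₀ : ∀ j t, U₀ j t = u t j) :
    X₁ = A * X₀ + B * U₀ := by
  ext j t
  have hx : X₀.col t = x t := funext fun k => hX₀ k t
  have hu : U₀.col t = u t := funext fun k => hU₀ k t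
  rw [hX₁, hdyn, ← hx, ← hu]
  rfl

theorem add_mul_mul_eq_mul_of_mul_eq_one {R : Type*} [Semiring R] [DecidableEq n]
    {A : Matrix n n R} {B : Matrix n m R} {X₀ X₁ : Matrix n τ R} {U₀ : Matrix m τ R}
    (hdata : X₁ = A * X₀ + B * U₀) {G : Matrix τ n R} (hG : X₀ * G = 1) :
    A + B * (U₀ * G) = X₁ * G := by
  rw [hdata, Matrix.add_mul, Matrix.mul_assoc, Matrix.mul_assoc, hG, Matrix.mul_one]

theorem stmt_2_general {K : Type*} [Field K] [DecidableEq n]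
    {A : Matrix n n K} {B : Matrix n m K} {X₀ X₁ : Matrix n τ K} {U₀ : Matrix m τ K}
    (hdata : X₁ = A * X₀ + B * U₀)
    (hrank : (Matrix.fromRows U₀ X₀).rank = Fintype.card m + Fintype.card n)
    {V : Submodule K (n → K)} (hV : IsControlledInvariant A.mulVecLin B.mulVecLin V) :
    (∃ G : Matrix τ n K, X₀ * G = 1 ∧ ∀ v ∈ V, (X₁ * G) *ᵥ v ∈ V) ∧
    (∀ G : Matrix τ n K, X₀ * G = 1 → (∀ v ∈ V, (X₁ * G) *ᵥ v ∈ V) →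
      A + B * (U₀ * G) = X₁ * G ∧ ∀ v ∈ V, (A + B * (U₀ * G)) *ᵥ v ∈ V) := by
  constructor
  · obtain ⟨F, hF⟩ := hV.exists_matrix_feedback
    obtain ⟨G, hUG, hXG⟩ := exists_matrix_mul_eq_and_mul_eq_of_rank_fromRows hrank F 1
    have hclosed : A + B * F = X₁ * G := hUG ▸ add_mul_mul_eq_mul_of_mul_eq_one hdata hXG
    exact ⟨G, hXG, hclosed ▸ hF⟩
  · intro G hXG hGV
    have hclosed := add_mul_mul_eq_mul_of_mul_eq_one hdata hXG
    exact ⟨hclosed, hclosed ▸ hGV⟩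

end

/-- data-driven feedback rendering a controlled invariant
subspace invariant.  Data comes from a single trajectory of horizon T. -/
theorem stmt_2
    (n m T : ℕ)
    (A : Matrix (Fin n) (Fin n) ℝ) (B : Matrix (Fin n) (Fin m) ℝ)
    -- single experimental trajectory
    (x : ℕ → Fin n → ℝ) (u : ℕ → Fin m → ℝ)
    (hdyn : ∀ t, x (t + 1) = A.mulVec (x t) + B.mulVec (u t))
    (X0T : Matrix (Fin n) (Fin T) ℝ) (hX0T : ∀ j t, X0T j t = x t.val j)
    (X1T : Matrix (Fin n) (Fin T) ℝ) (hX1T : ∀ j t, X1T j t = x (t.val + 1) j)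
    (U0T : Matrix (Fin m) (Fin T) ℝ) (hU0T : ∀ j t, U0T j t = u t.val j)
    -- [U_{0,T}; X_{0,T}] has full row rank m + n
    (hrank : (Matrix.fromRows U0T X0T).rank = m + n)
    -- V is an (A, Im B)-controlled invariant subspace
    (V : Submodule ℝ (Fin n → ℝ))
    (hV : ∀ v ∈ V, A.mulVec v ∈ V ⊔ LinearMap.range B.mulVecLin) :
    -- there exists G with X_{0,T}·G = I and (X_{1,T}·G)·V ⊆ V, and for any such
    -- G the feedback F = U_{0,T}·G satisfies A + B·F = X_{1,T}·G, hence
    -- (A + B·F)·V ⊆ V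
    (∃ G : Matrix (Fin T) (Fin n) ℝ,
        X0T * G = 1 ∧ ∀ v ∈ V, (X1T * G).mulVec v ∈ V) ∧
    (∀ G : Matrix (Fin T) (Fin n) ℝ,
        X0T * G = 1 → (∀ v ∈ V, (X1T * G).mulVec v ∈ V) →
        A + B * (U0T * G) = X1T * G ∧
        ∀ v ∈ V, (A + B * (U0T * G)).mulVec v ∈ V) := by
  exact stmt_2_general (data_eq_mul_add_mul_of_trajectory hdyn hX0T hX1T hU0T)
    (by simpa only [Fintype.card_fin] using hrank) hV
end

section
/- For any ξ ∈ ℝⁿ and any finite horizon T ≥ n, the following are equivalent: (i) ξ ∈ S*; (ii) there exists an input sequence u(0),…,u(T−1) such that the trajectory of the system with x(0) = 0 satisfies y(t) = C x(t) = 0 for all t ∈ {0,…,T−1} and x(T) = ξ. -/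
/-!
Write `F W = A (W ⊓ Ker C) + Im B`. A subspace `W` is conditioned invariant and contains `Im B`
exactly when `F W ≤ W`, so `S*` is the least pre-fixed point of the monotone map `F`. On the other
hand `F^[k] ⊥` is the set of states reachable from zero in `k` steps with zero output along the
way. These sets increase with `k` and stay constant from the first repetition on, which happens
after at most as many steps as the longest chain of subspaces, that is after `n` steps; the limit
is `S*`.
-/

section Iterate

open Order

variable {α : Type*} [PartialOrder α] {f : α → α} {k : ℕ}

theorem iterate_lt_iterate_succ_of_not_isFixedPt {x : α} (hf : Monotone f) (hx : x ≤ f x)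
    (hfix : ¬ Function.IsFixedPt f (f^[k] x)) {j : ℕ} (hj : j ≤ k) :
    f^[j] x < f^[j + 1] x := by
  refine (hf.monotone_iterate_of_le_map hx j.le_succ).lt_of_ne fun hrepeat ↦ hfix ?_
  have hj_fix : Function.IsFixedPt f (f^[j] x) :=
    (Function.iterate_succ_apply' f j x).symm.trans hrepeat.symm
  obtain ⟨i, rfl⟩ := Nat.exists_eq_add_of_le' hj
  rwa [Function.iterate_add_apply, hj_fix.iterate i]

theorem isFixedPt_iterate_of_krullDim_le {x : α} (hf : Monotone f) (hx : x ≤ f x)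
    (hk : krullDim α ≤ k) : Function.IsFixedPt f (f^[k] x) := by
  by_contra hfix
  let chain : LTSeries α :=
    { length := k + 1
      toFun := fun i ↦ f^[i] x
      step := fun i ↦
        iterate_lt_iterate_succ_of_not_isFixedPt hf hx hfix (Nat.lt_succ_iff.mp i.isLt) }
  have hlength : k + 1 ≤ k := by exact_mod_cast chain.length_le_krullDim.trans hk
  exact Nat.not_succ_le_self k hlength

theorem isLeast_iterate_bot_of_krullDim_le [OrderBot α] (hf : Monotone f)
    (hk : krullDim α ≤ k) : IsLeast {a | f a ≤ a} (f^[k] ⊥) := by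
  refine ⟨(isFixedPt_iterate_of_krullDim_le hf bot_le hk).le, fun a ha ↦ ?_⟩
  calc
    f^[k] ⊥ ≤ f^[k] a := hf.iterate k bot_le
    _ ≤ a := hf.antitone_iterate_of_map_le ha k.zero_le

end Iterate

section LinearSystem

variable {R X U Y : Type*} [Semiring R] [AddCommMonoid X] [Module R X]
  [AddCommMonoid U] [Module R U] [AddCommMonoid Y] [Module R Y]
  (A : X →ₗ[R] X) (B : U →ₗ[R] X) (C : X →ₗ[R] Y)

/-- `(A, Ker C)`-conditioned invariance of `W`, i.e. `A (W ∩ Ker C) ⊆ W`, stated elementwise. -/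
def IsConditionedInvariant (W : Submodule R X) : Prop :=
  ∀ x ∈ W ⊓ LinearMap.ker C, A x ∈ W

/-- The map `W ↦ A (W ∩ Ker C) + Im B`, the set of possible successors of the states of
`W` with zero output. Iterating it from `⊥` gives the conditioned invariant subspace
algorithm. -/
def conditionedInvariantStep (W : Submodule R X) : Submodule R X :=
  (W ⊓ LinearMap.ker C).map A ⊔ LinearMap.range B

/-- The solution of `x (t + 1) = A (x t) + B (u t)` with `x 0 = 0`, for the input sequence `u`. -/
def zeroStateTrajectory (u : ℕ → U) : ℕ → X
  | 0 => 0
  | t + 1 => A (zeroStateTrajectory u t) + B (u t)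

theorem conditionedInvariantStep_mono : Monotone (conditionedInvariantStep A B C) :=
  fun _ _ h ↦ sup_le_sup_right (Submodule.map_mono (inf_le_inf_right _ h)) _

theorem conditionedInvariantStep_le_iff {W : Submodule R X} :
    conditionedInvariantStep A B C W ≤ W ↔
      IsConditionedInvariant A C W ∧ LinearMap.range B ≤ W := by
  rw [conditionedInvariantStep, sup_le_iff, Submodule.map_le_iff_le_comap]
  rfl

theorem mem_conditionedInvariantStep_iff {W : Submodule R X} {ξ : X} :
    ξ ∈ conditionedInvariantStep A B C W ↔ ∃ x ∈ W, C x = 0 ∧ ∃ w, A x + B w = ξ := by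
  simp only [conditionedInvariantStep, Submodule.mem_sup, Submodule.mem_map, Submodule.mem_inf,
    LinearMap.mem_ker, LinearMap.mem_range, exists_exists_eq_and]
  constructor
  · rintro ⟨_, ⟨x, ⟨hxW, hCx⟩, rfl⟩, w, rfl⟩
    exact ⟨x, hxW, hCx, w, rfl⟩
  · rintro ⟨x, hxW, hCx, w, rfl⟩
    exact ⟨A x, ⟨x, ⟨hxW, hCx⟩, rfl⟩, w, rfl⟩

theorem zeroStateTrajectory_congr {u v : ℕ → U} {t : ℕ} (h : ∀ s < t, u s = v s) :
    zeroStateTrajectory A B u t = zeroStateTrajectory A B v t := by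
  induction t with
  | zero => rfl
  | succ t ih =>
    rw [zeroStateTrajectory, zeroStateTrajectory, ih fun s hs ↦ h s (hs.trans t.lt_succ_self),
      h t t.lt_succ_self]

theorem eq_zeroStateTrajectory_iff {x : ℕ → X} {u : ℕ → U} :
    x = zeroStateTrajectory A B u ↔ x 0 = 0 ∧ ∀ t, x (t + 1) = A (x t) + B (u t) := by
  refine ⟨?_, fun ⟨h_zero, h_succ⟩ ↦ funext fun t ↦ ?_⟩
  · rintro rfl
    exact ⟨rfl, fun _ ↦ rfl⟩
  · induction t with
    | zero => exact h_zero
    | succ t ih => rw [h_succ, ih, zeroStateTrajectory]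

theorem mem_iterate_conditionedInvariantStep_bot_iff {k : ℕ} {ξ : X} :
    ξ ∈ (conditionedInvariantStep A B C)^[k] ⊥ ↔
      ∃ u : ℕ → U, (∀ t < k, C (zeroStateTrajectory A B u t) = 0) ∧
        zeroStateTrajectory A B u k = ξ := by
  induction k generalizing ξ with
  | zero => simp [zeroStateTrajectory, eq_comm]
  | succ k ih =>
    simp only [Function.iterate_succ_apply', mem_conditionedInvariantStep_iff, ih]
    constructor
    · rintro ⟨_, ⟨u, hu, rfl⟩, hk, w, rfl⟩
      have h_past : ∀ t ≤ k, zeroStateTrajectory A B (Function.update u k w) t =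
          zeroStateTrajectory A B u t := fun t ht ↦
        zeroStateTrajectory_congr A B fun s hs ↦ Function.update_of_ne (hs.trans_le ht).ne _ _
      refine ⟨Function.update u k w, Nat.forall_lt_succ_right.mpr ⟨fun t ht ↦ ?_, ?_⟩, ?_⟩
      · rw [h_past t ht.le, hu t ht]
      · rw [h_past k le_rfl, hk]
      · rw [zeroStateTrajectory, h_past k le_rfl, Function.update_self]
    · rintro ⟨u, hu, rfl⟩
      obtain ⟨h_past, hk⟩ := Nat.forall_lt_succ_right.mp hu
      exact ⟨_, ⟨u, h_past, rfl⟩, hk, u k, rfl⟩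

end LinearSystem

theorem stmt_8_general {R X U Y : Type*} [Ring R] [AddCommGroup X] [Module R X]
    [AddCommMonoid U] [Module R U] [AddCommMonoid Y] [Module R Y]
    (A : X →ₗ[R] X) (B : U →ₗ[R] X) (C : X →ₗ[R] Y) {T : ℕ} (hT : Module.length R X ≤ T)
    {S : Submodule R X}
    (hS : IsLeast {W | IsConditionedInvariant A C W ∧ LinearMap.range B ≤ W} S) (ξ : X) :
    ξ ∈ S ↔
      ∃ (x : ℕ → X) (u : ℕ → U),
        x 0 = 0 ∧ (∀ t, x (t + 1) = A (x t) + B (u t)) ∧ (∀ t < T, C (x t) = 0) ∧ x T = ξ := by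
  have hdim : Order.krullDim (Submodule R X) ≤ T := by
    rw [← Module.coe_length]
    exact_mod_cast hT
  have h_least := isLeast_iterate_bot_of_krullDim_le (conditionedInvariantStep_mono A B C) hdim
  simp only [conditionedInvariantStep_le_iff] at h_least
  rw [hS.unique h_least, mem_iterate_conditionedInvariantStep_bot_iff, exists_comm]
  simp only [← and_assoc, ← eq_zeroStateTrajectory_iff]
  simp only [and_assoc, exists_eq_left]

/-- ξ ∈ S* iff ξ is reachable in T ≥ n steps from x(0) = 0 with an
input keeping the output identically zero on {0,…,T−1}. -/
theorem stmt_8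
    (n m p T : ℕ) (hT : n ≤ T)
    (A : Matrix (Fin n) (Fin n) ℝ) (B : Matrix (Fin n) (Fin m) ℝ)
    (C : Matrix (Fin p) (Fin n) ℝ)
    -- S* : smallest (A, Ker C)-conditioned invariant subspace containing Im B
    (Sstar : Submodule ℝ (Fin n → ℝ))
    (hSinv : ∀ v ∈ Sstar ⊓ LinearMap.ker C.mulVecLin, A.mulVec v ∈ Sstar)
    (hSim : LinearMap.range B.mulVecLin ≤ Sstar)
    (hSmin : ∀ W : Submodule ℝ (Fin n → ℝ),
      (∀ v ∈ W ⊓ LinearMap.ker C.mulVecLin, A.mulVec v ∈ W) →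
      LinearMap.range B.mulVecLin ≤ W → Sstar ≤ W)
    (ξ : Fin n → ℝ) :
    ξ ∈ Sstar ↔
      ∃ (x : ℕ → Fin n → ℝ) (u : ℕ → Fin m → ℝ),
        x 0 = 0 ∧
        (∀ t, x (t + 1) = A.mulVec (x t) + B.mulVec (u t)) ∧
        (∀ t < T, C.mulVec (x t) = 0) ∧
        x T = ξ :=
  stmt_8_general A.mulVecLin B.mulVecLin C.mulVecLin (by simpa [Module.length_eq_finrank] using hT)
    ⟨⟨hSinv, hSim⟩, fun W hW ↦ hSmin W hW.1 hW.2⟩ ξ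
end

section
/- Assume T ≥ n and persistency of excitation, and let R be a matrix whose columns form a basis of R* = V* ∩ S*. If a vector v satisfies X·K0·v ∈ Im(I_T ⊗ R) (where I_T ⊗ R is the block-diagonal matrix with T diagonal copies of R), then X·K0·v is the stacked state trajectory (x(1),…,x(T)) of the system with initial state x(0) = 0 and stacked input U·K0·v, and this trajectory satisfies x(t) ∈ R* for all t ∈ {1,…,T}. -/
/-!
The system is linear, so weighting the `N` experiments by any `w` gives again a trajectory, whose
stacked data are the data matrices applied to `w`. For `w ∈ Ker X0` the initial states cancel, and
`K0 v` is such a `w`. Finally `Im (I_T ⊗ R)` consists of the stacked vectors all of whose `T` blocks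
lie in `Im R`.
-/

section

open Matrix Kronecker

variable {K ι κ μ ρ τ : Type*} [CommSemiring K]

theorem sum_smul_apply_eq_mulVec_apply [Fintype ι] {M : Matrix ρ ι K} {r : ρ} {f : ι → κ → K}
    {k : κ} (h : ∀ i, M r i = f i k) (w : ι → K) : (∑ i, w i • f i) k = (M *ᵥ w) r := by
  simp only [Finset.sum_apply, Pi.smul_apply, smul_eq_mul, mulVec, dotProduct, h, mul_comm]

theorem mem_range_one_kronecker_mulVecLin_iff [Fintype τ] [DecidableEq τ] [Fintype ρ]
    {R : Matrix κ ρ K} {y : τ × κ → K} :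
    y ∈ LinearMap.range ((1 : Matrix τ τ K) ⊗ₖ R).mulVecLin ↔
      ∀ t, (fun j => y (t, j)) ∈ LinearMap.range R.mulVecLin := by
  constructor
  · rintro ⟨z, rfl⟩ t
    let Z : Matrix ρ τ K := of fun k t => z (t, k)
    exact ⟨Zᵀ t, funext fun j => congrFun (vec_mul_eq_mulVec R Z) (t, j)⟩
  · intro h
    choose z hz using h
    refine ⟨vec (of z)ᵀ, ?_⟩
    rw [mulVecLin_apply, ← vec_mul_eq_mulVec]
    exact funext fun ⟨t, j⟩ => congrFun (hz t) j

variable [Fintype κ] [Fintype μ]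

/-- `(x, u)` is a state-input trajectory, over all times `t : ℕ`, of the discrete-time system
`x(t+1) = A x(t) + B u(t)`. -/
def IsTrajectory (A : Matrix κ κ K) (B : Matrix κ μ K) (x : ℕ → κ → K) (u : ℕ → μ → K) : Prop :=
  ∀ t, x (t + 1) = A *ᵥ x t + B *ᵥ u t

theorem IsTrajectory.sum_smul {A : Matrix κ κ K} {B : Matrix κ μ K} {s : Finset ι}
    {x : ι → ℕ → κ → K} {u : ι → ℕ → μ → K} (h : ∀ i ∈ s, IsTrajectory A B (x i) (u i))
    (w : ι → K) :
    IsTrajectory A B (fun t => ∑ i ∈ s, w i • x i t) (fun t => ∑ i ∈ s, w i • u i t) := by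
  intro t
  calc ∑ i ∈ s, w i • x i (t + 1)
      = ∑ i ∈ s, w i • (A *ᵥ x i t + B *ᵥ u i t) :=
        Finset.sum_congr rfl fun i hi => by rw [h i hi t]
    _ = A *ᵥ (∑ i ∈ s, w i • x i t) + B *ᵥ (∑ i ∈ s, w i • u i t) := by
        simp only [mulVec_sum, mulVec_smul, smul_add, Finset.sum_add_distrib]

theorem stmt_15_general [Fintype ι] [Fintype ρ] {T : ℕ} {A : Matrix κ κ K} {B : Matrix κ μ K}
    {x : ι → ℕ → κ → K} {u : ι → ℕ → μ → K} (hdyn : ∀ i, IsTrajectory A B (x i) (u i))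
    {X0 : Matrix κ ι K} (hX0 : ∀ j i, X0 j i = x i 0 j)
    {U : Matrix (Fin T × μ) ι K} (hU : ∀ (t : Fin T) j i, U (t, j) i = u i t j)
    {X : Matrix (Fin T × κ) ι K} (hX : ∀ (t : Fin T) j i, X (t, j) i = x i (t + 1) j)
    {R : Matrix κ ρ K} {w : ι → K} (hw : X0 *ᵥ w = 0)
    (hXw : X *ᵥ w ∈ LinearMap.range ((1 : Matrix (Fin T) (Fin T) K) ⊗ₖ R).mulVecLin) :
    ∃ (xbar : ℕ → κ → K) (ubar : ℕ → μ → K),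
      xbar 0 = 0 ∧
      IsTrajectory A B xbar ubar ∧
      (∀ tj : Fin T × μ, ubar tj.1 tj.2 = (U *ᵥ w) tj) ∧
      (∀ tj : Fin T × κ, xbar (tj.1 + 1) tj.2 = (X *ᵥ w) tj) ∧
      (∀ t, 1 ≤ t → t ≤ T → xbar t ∈ LinearMap.range R.mulVecLin) := by
  have initial : ∑ i, w i • x i 0 = 0 :=
    (funext fun j => sum_smul_apply_eq_mulVec_apply (hX0 j) w).trans hw
  have states (t : Fin T) (j : κ) : (∑ i, w i • x i (t + 1)) j = (X *ᵥ w) (t, j) :=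
    sum_smul_apply_eq_mulVec_apply (hX t j) w
  refine ⟨fun t => ∑ i, w i • x i t, fun t => ∑ i, w i • u i t, initial,
    .sum_smul (fun i _ => hdyn i) w,
    fun ⟨t, j⟩ => sum_smul_apply_eq_mulVec_apply (hU t j) w, fun ⟨t, j⟩ => states t j, ?_⟩
  rintro (_ | t) ht htT
  · omega
  · simpa only [← states] using mem_range_one_kronecker_mulVecLin_iff.mp hXw ⟨t, htT⟩

end

/-- if X·K0·v ∈ Im(I_T ⊗ R), where the columns of R form a basis
of R* = V* ∩ S*, then X·K0·v is the stacked state trajectory of the system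
starting at the origin with stacked input U·K0·v, and this trajectory evolves
inside R*. -/
theorem stmt_15
    (n m p N T : ℕ) (hT : n ≤ T)
    (A : Matrix (Fin n) (Fin n) ℝ) (B : Matrix (Fin n) (Fin m) ℝ)
    (C : Matrix (Fin p) (Fin n) ℝ)
    -- V* : largest (A, Im B)-controlled invariant subspace contained in Ker C
    (Vstar : Submodule ℝ (Fin n → ℝ))
    (hVinv : ∀ v ∈ Vstar, A.mulVec v ∈ Vstar ⊔ LinearMap.range B.mulVecLin)
    (hVker : Vstar ≤ LinearMap.ker C.mulVecLin)
    (hVmax : ∀ W : Submodule ℝ (Fin n → ℝ),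
      (∀ v ∈ W, A.mulVec v ∈ W ⊔ LinearMap.range B.mulVecLin) →
      W ≤ LinearMap.ker C.mulVecLin → W ≤ Vstar)
    -- S* : smallest (A, Ker C)-conditioned invariant subspace containing Im B
    (Sstar : Submodule ℝ (Fin n → ℝ))
    (hSinv : ∀ v ∈ Sstar ⊓ LinearMap.ker C.mulVecLin, A.mulVec v ∈ Sstar)
    (hSim : LinearMap.range B.mulVecLin ≤ Sstar)
    (hSmin : ∀ W : Submodule ℝ (Fin n → ℝ),
      (∀ v ∈ W ⊓ LinearMap.ker C.mulVecLin, A.mulVec v ∈ W) →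
      LinearMap.range B.mulVecLin ≤ W → Sstar ≤ W)
    -- data generated by N experiments of horizon T
    (x : Fin N → ℕ → Fin n → ℝ) (u : Fin N → ℕ → Fin m → ℝ)
    (hdyn : ∀ i t, x i (t + 1) = A.mulVec (x i t) + B.mulVec (u i t))
    (X0 : Matrix (Fin n) (Fin N) ℝ) (hX0 : ∀ j i, X0 j i = x i 0 j)
    (U : Matrix (Fin T × Fin m) (Fin N) ℝ)
    (hU : ∀ (t : Fin T) (j : Fin m) (i : Fin N), U (t, j) i = u i t.val j)
    (X : Matrix (Fin T × Fin n) (Fin N) ℝ)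
    (hX : ∀ (t : Fin T) (j : Fin n) (i : Fin N), X (t, j) i = x i (t.val + 1) j)
    -- persistency of excitation
    (hpe : (Matrix.fromRows X0 U).rank = n + m * T)
    -- K0: matrix whose columns form a basis of Ker X0
    (k0 : ℕ)
    (K0 : Matrix (Fin N) (Fin k0) ℝ)
    (hK0range : LinearMap.range K0.mulVecLin = LinearMap.ker X0.mulVecLin)
    (hK0inj : Function.Injective K0.mulVecLin)
    -- R: matrix whose columns form a basis of R* = V* ∩ S*
    (q : ℕ) (R : Matrix (Fin n) (Fin q) ℝ)
    (hRrange : LinearMap.range R.mulVecLin = Vstar ⊓ Sstar)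
    (hRinj : Function.Injective R.mulVecLin)
    -- the vector v with X·K0·v ∈ Im(I_T ⊗ R)
    (v : Fin k0 → ℝ)
    (hv : (X * K0).mulVec v ∈
      LinearMap.range (Matrix.kroneckerMap (· * ·)
        (1 : Matrix (Fin T) (Fin T) ℝ) R).mulVecLin) :
    ∃ (xbar : ℕ → Fin n → ℝ) (ubar : ℕ → Fin m → ℝ),
      -- it starts at the origin,
      xbar 0 = 0 ∧
      -- it is a trajectory of the system,
      (∀ t, xbar (t + 1) = A.mulVec (xbar t) + B.mulVec (ubar t)) ∧
      -- with stacked input U·K0·v,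
      (∀ tj : Fin T × Fin m, ubar tj.1.val tj.2 = (U * K0).mulVec v tj) ∧
      -- its stacked state trajectory (x(1),…,x(T)) is X·K0·v,
      (∀ tj : Fin T × Fin n, xbar (tj.1.val + 1) tj.2 = (X * K0).mulVec v tj) ∧
      -- and it satisfies x(t) ∈ R* for all t ∈ {1,…,T}
      (∀ t, 1 ≤ t → t ≤ T → xbar t ∈ Vstar ⊓ Sstar) := by
  have hw : X0.mulVec (K0.mulVec v) = 0 := hK0range.le ⟨v, rfl⟩
  simp only [← Matrix.mulVec_mulVec, ← hRrange] at hv ⊢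
  exact stmt_15_general hdyn hX0 hU hX hw hv
end
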